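/- The following commutation relations hold: [O2, H] = −O2, [O1, H] = O1, [O2, E] = −O2, [O1, E] = −O1, [O2, Y] = O1, and [O1, X] = O2. -/

import Mathlib

open MvPolynomial Complex

noncomputable section

/-- The space of complex polynomials in three variables `x = X 0`, `y = X 1`, `q = X 2`. -/
abbrev V : Type := MvPolynomial (Fin 3) ℂ

/-- Partial derivative `∂_x`. -/
def Dx : Module.End ℂ V := (pderiv (0 : Fin 3)).toLinearMap
/-- Partial derivative `∂_y`. -/
def Dy : Module.End ℂ V := (pderiv (1 : Fin 3)).toLinearMap
/-- Partial derivative `∂_q`. -/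
def Dq : Module.End ℂ V := (pderiv (2 : Fin 3)).toLinearMap
/-- Multiplication by `x`. -/
def Mx : Module.End ℂ V := LinearMap.mulLeft ℂ (X 0)
/-- Multiplication by `y`. -/
def My : Module.End ℂ V := LinearMap.mulLeft ℂ (X 1)
/-- Multiplication by `q`. -/
def Mq : Module.End ℂ V := LinearMap.mulLeft ℂ (X 2)

/-- `X = -y ∂_x - (i/2) q²`. -/
def opX : Module.End ℂ V := -(My * Dx) - (I / 2) • (Mq * Mq)
/-- `H = -x ∂_x + y ∂_y + q ∂_q + 1/2`. -/
def opH : Module.End ℂ V := -(Mx * Dx) + My * Dy + Mq * Dq + (1 / 2 : ℂ) • 1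
/-- `Y = -x ∂_y - (i/2) ∂_q²`. -/
def opY : Module.End ℂ V := -(Mx * Dy) - (I / 2) • (Dq * Dq)
/-- `E = x ∂_x + y ∂_y + 1/2`. -/
def opE : Module.End ℂ V := Mx * Dx + My * Dy + (1 / 2 : ℂ) • 1
/-- The symplectic Dirac operator `D_s = i q ∂_y - ∂_x ∂_q`. -/
def Ds : Module.End ℂ V := I • (Mq * Dy) - Dx * Dq
/-- `X_s = y ∂_q + i x q`. -/
def Xs : Module.End ℂ V := My * Dq + I • (Mx * Mq)
/-- `O1 = x² ∂_x + x y ∂_y - (1/2) x q ∂_q + (i/2) y ∂_q² + (1/2) x`. -/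
def opO1 : Module.End ℂ V :=
  Mx * Mx * Dx + Mx * My * Dy - (1 / 2 : ℂ) • (Mx * Mq * Dq) + (I / 2) • (My * Dq * Dq)
    + (1 / 2 : ℂ) • Mx
/-- `O2 = x y ∂_x + y² ∂_y + (1/2) y q ∂_q + (i/2) x q² + y`. -/
def opO2 : Module.End ℂ V :=
  Mx * My * Dx + My * My * Dy + (1 / 2 : ℂ) • (My * Mq * Dq) + (I / 2) • (Mx * Mq * Mq) + My

theorem pderiv_comm_aux (i j : Fin 3) (p : V) :
    pderiv i (pderiv j p) = pderiv j (pderiv i p) := by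
  have h : ⁅(pderiv i : Derivation ℂ V V), (pderiv j : Derivation ℂ V V)⁆ = 0 := by
    apply MvPolynomial.derivation_ext
    intro k
    rw [Derivation.commutator_apply]
    simp only [pderiv_X, Pi.single_apply]
    split_ifs <;> simp
  have h2 := congrArg (fun D : Derivation ℂ V V => D p) h
  simp only [Derivation.commutator_apply, Derivation.zero_apply] at h2
  exact sub_eq_zero.mp h2

theorem C_half_I_sq : (C (I / 2) : V) * C (I / 2) = - (C (1 / 2) * C (1 / 2)) := by
  rw [← C_mul, ← C_mul, ← C_neg]
  congr 1
  have := I_mul_I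
  linear_combination (1 / 4 : ℂ) * this

theorem C_half_two : (C (1 / 2) : V) * 2 = 1 := by
  rw [show (2 : V) = C 2 from (map_ofNat C 2).symm, ← C_mul]
  norm_num

/-- `[O2, H] = -O2`, `[O1, H] = O1`, `[O2, E] = -O2`, `[O1, E] = -O1`,
`[O2, Y] = O1`, `[O1, X] = O2`. -/
theorem commutators_O_with_sl2 :
    opO2 * opH - opH * opO2 = -opO2 ∧
    opO1 * opH - opH * opO1 = opO1 ∧
    opO2 * opE - opE * opO2 = -opO2 ∧
    opO1 * opE - opE * opO1 = -opO1 ∧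
    opO2 * opY - opY * opO2 = opO1 ∧
    opO1 * opX - opX * opO1 = opO2 := by
  have e10 := pderiv_comm_aux 1 0
  have e20 := pderiv_comm_aux 2 0
  have e21 := pderiv_comm_aux 2 1
  have h1 := C_half_I_sq
  have h2 := C_half_two
  refine ⟨?_, ?_, ?_, ?_, ?_, ?_⟩ <;>
  · apply LinearMap.ext
    intro p
    simp only [opO1, opO2, opH, opE, opX, opY, Dx, Dy, Dq, Mx, My, Mq, Module.End.mul_apply,
      LinearMap.sub_apply, LinearMap.add_apply, LinearMap.neg_apply, LinearMap.smul_apply,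
      LinearMap.mulLeft_apply, Module.End.one_apply, Derivation.coeFn_coe, map_add, map_sub,
      map_neg, Derivation.leibniz, smul_eq_mul, MvPolynomial.smul_eq_C_mul, pderiv_C, pderiv_X,
      Pi.single_apply, e10, e20, e21]
    simp only [Fin.isValue, Fin.reduceEq, if_true, if_false, mul_zero, zero_mul, add_zero,
      zero_add, mul_one, one_mul, map_zero, pderiv_one]
    generalize (C (I / 2) : V) = a at *
    generalize (C (1 / 2) : V) = b at *
    grind
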